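/- The automorphism σ of the projective line P¹(k) given by σ([u:v]) = [v : −u − 2v] has [−1:1] as its unique fixed point; moreover every other point of P¹(k) has infinite σ-orbit, i.e., if σⁿ(p) = p for some integer n ≥ 1 then p = [−1:1]. -/

import Mathlib

/-!
Statement 8: The automorphism σ of P¹(k) given by σ([u:v]) = [v : −u−2v] has [−1:1] as its
unique fixed point; moreover every other point of P¹(k) has infinite σ-orbit: if σⁿ(p) = p
for some n ≥ 1 then p = [−1:1].  Here k is a field of characteristic 0.
-/

noncomputable section

open scoped LinearAlgebra.Projectivization

variable (k : Type*) [Field k]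

/-- The linear map `(u, v) ↦ (v, −u − 2v)` on `k²`. -/
def sigmaLin : (Fin 2 → k) →ₗ[k] (Fin 2 → k) :=
  Matrix.toLin' !![0, 1; -1, -2]

/-- The inverse linear map. -/
def sigmaLinInv : (Fin 2 → k) →ₗ[k] (Fin 2 → k) :=
  Matrix.toLin' !![-2, -1; 1, 0]

lemma sigmaLin_leftInverse :
    Function.LeftInverse (sigmaLinInv k) (sigmaLin k) := by
  intro p
  have : (!![-2, -1; 1, 0] * !![0, 1; -1, -2] : Matrix (Fin 2) (Fin 2) k) = 1 := by
    rw [Matrix.mul_fin_two, Matrix.one_fin_two]; norm_num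
  calc sigmaLinInv k (sigmaLin k p)
      = Matrix.toLin' (!![-2, -1; 1, 0] * !![0, 1; -1, -2] : Matrix (Fin 2) (Fin 2) k) p := by
        rw [Matrix.toLin'_mul]; rfl
    _ = p := by rw [this, Matrix.toLin'_one]; rfl

lemma sigmaLin_injective : Function.Injective (sigmaLin k) :=
  (sigmaLin_leftInverse k).injective

/-- The automorphism σ of the projective line `P¹(k)`, `[u:v] ↦ [v : −u − 2v]`. -/
def sigmaProj : ℙ k (Fin 2 → k) → ℙ k (Fin 2 → k) :=
  Projectivization.map (sigmaLin k) (sigmaLin_injective k)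

/-- The point `[−1 : 1]` of `P¹(k)`. -/
def fixedPt : ℙ k (Fin 2 → k) :=
  Projectivization.mk k ![-1, 1] (by
    intro h
    simpa using congrFun h 1)

variable {k}

lemma sigmaLin_apply (v : Fin 2 → k) : sigmaLin k v = ![v 1, -v 0 - 2 * v 1] := by
  ext i
  fin_cases i <;> simp [sigmaLin, Matrix.mulVec, dotProduct, Fin.sum_univ_two]
  ring

/-- Since `sigmaLin k + 1` squares to zero, the iterates of `sigmaLin k` are affine in `n`
up to sign. -/
lemma sigmaLin_iterate_apply (n : ℕ) (v : Fin 2 → k) :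
    (sigmaLin k)^[n] v =
      (-1 : k) ^ n • ![v 0 - n * (v 0 + v 1), v 1 + n * (v 0 + v 1)] := by
  induction n with
  | zero => ext i; fin_cases i <;> simp
  | succ n ih =>
    rw [Function.iterate_succ_apply', ih, map_smul, sigmaLin_apply]
    ext i
    fin_cases i <;> simp <;> ring

lemma sigmaProj_iterate_mk (n : ℕ) (v : Fin 2 → k) (hv : v ≠ 0)
    (hw : (sigmaLin k)^[n] v ≠ 0) :
    (sigmaProj k)^[n] (Projectivization.mk k v hv) =
      Projectivization.mk k ((sigmaLin k)^[n] v) hw := by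
  induction n with
  | zero => rfl
  | succ n ih =>
    have hn : (sigmaLin k)^[n] v ≠ 0 := fun h => hw <| by
      rw [Function.iterate_succ_apply', h, map_zero]
    simp only [Function.iterate_succ_apply', ih hn]
    exact Projectivization.map_mk _ _ _ _

lemma mk_eq_fixedPt_iff (v : Fin 2 → k) (hv : v ≠ 0) :
    Projectivization.mk k v hv = fixedPt k ↔ v 0 + v 1 = 0 := by
  rw [fixedPt, Projectivization.mk_eq_mk_iff']
  constructor
  · rintro ⟨a, rfl⟩
    simp
  · intro h
    refine ⟨v 1, ?_⟩
    ext i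
    fin_cases i
    · simpa using (eq_neg_of_add_eq_zero_left h).symm
    · simp

lemma sigmaProj_fixedPt : sigmaProj k (fixedPt k) = fixedPt k := by
  rw [fixedPt, sigmaProj, Projectivization.map_mk]
  refine (mk_eq_fixedPt_iff _ _).2 ?_
  simp [sigmaLin_apply]
  ring

lemma eq_fixedPt_of_sigmaProj_iterate_eq [CharZero k] (p : ℙ k (Fin 2 → k)) (n : ℕ)
    (hn : 1 ≤ n) (h : (sigmaProj k)^[n] p = p) : p = fixedPt k := by
  induction p using Projectivization.ind with
  | h v hv =>
    have hw : (sigmaLin k)^[n] v ≠ 0 := fun h0 => hv <|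
      (sigmaLin_injective k).iterate n (by rw [h0, iterate_map_zero])
    rw [sigmaProj_iterate_mk n v hv hw, Projectivization.mk_eq_mk_iff'] at h
    obtain ⟨a, ha⟩ := h
    rw [sigmaLin_iterate_apply] at ha
    have h0 := congrFun ha 0
    have h1 := congrFun ha 1
    simp at h0 h1
    have key : (-1 : k) ^ n * n * (v 0 + v 1) ^ 2 = 0 := by
      linear_combination v 1 * h0 - v 0 * h1
    rw [mk_eq_fixedPt_iff]
    have hn' : (n : k) ≠ 0 := Nat.cast_ne_zero.2 (by omega)
    simpa [hn'] using key

variable (k)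

theorem sigma_unique_fixed_point_and_infinite_orbits (k : Type*) [Field k] [CharZero k] :
    (∀ p : ℙ k (Fin 2 → k), sigmaProj k p = p ↔ p = fixedPt k) ∧
      (∀ (p : ℙ k (Fin 2 → k)) (n : ℕ), 1 ≤ n → (sigmaProj k)^[n] p = p → p = fixedPt k) := by
  refine ⟨fun p => ⟨fun h => ?_, ?_⟩, eq_fixedPt_of_sigmaProj_iterate_eq⟩
  · exact eq_fixedPt_of_sigmaProj_iterate_eq p 1 le_rfl h
  · rintro rfl
    exact sigmaProj_fixedPt

end
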